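/- arXiv:2109.13605 — 2 statements merged into one kernel-verified Lean document; each statement's English description precedes it below -/
import Mathlib

section
/- Let J be a commutative (not necessarily associative, not necessarily unital) ℝ-algebra satisfying the Jordan identity (x * y) * (x * x) = x * (y * (x * x)) for all x, y ∈ J, and let a ∈ J be an idempotent (a * a = a). Then J is the internal direct sum of the three ℝ-subspaces J₁(a) = {x ∈ J | a * x = x}, J_{1/2}(a) = {x ∈ J | a * x = (1/2) • x}, and J₀(a) = {x ∈ J | a * x = 0} (Peirce decomposition of a Jordan algebra relative to an idempotent). -/
/-!
Polarizing the Jordan identity at an idempotent `a` gives `2 L³ - 3 L² + L = 0` for `L = L_a`, so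
`L` is annihilated by `X (X - 1) (2 X - 1)`. Its roots `1`, `1/2`, `0` differ by units as soon as
`2` is invertible, so the Lagrange basis polynomials at these nodes, evaluated at `L`, are the
projections onto the three eigenspaces.
-/

open Polynomial

section PeircePolynomials

variable (R : Type*) [CommRing R]

/-- The polynomial with simple roots `1`, `1/2`, `0` that annihilates multiplication by an
idempotent of a Jordan algebra. It is not normalized to be monic, so that it makes sense over every
commutative ring. -/
noncomputable def peircePolynomial : R[X] := X * (X - 1) * (2 * X - 1)

/-- The Lagrange basis polynomial of the node `1` among `1`, `1/2`, `0`; its value at `L_a` is the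
Peirce projection onto `J₁(a)`. -/
noncomputable def peirceBasisOne : R[X] := X * (2 * X - 1)

/-- The Lagrange basis polynomial of the node `1/2` among `1`, `1/2`, `0`; its value at `L_a` is the
Peirce projection onto `J_{1/2}(a)`. -/
noncomputable def peirceBasisHalf : R[X] := 2 * X * (2 - 2 * X)

/-- The Lagrange basis polynomial of the node `0` among `1`, `1/2`, `0`; its value at `L_a` is the
Peirce projection onto `J₀(a)`. -/
noncomputable def peirceBasisZero : R[X] := (1 - X) * (1 - 2 * X)

theorem peirceBasisOne_add_peirceBasisHalf_add_peirceBasisZero :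
    peirceBasisOne R + peirceBasisHalf R + peirceBasisZero R = 1 := by
  unfold peirceBasisOne peirceBasisHalf peirceBasisZero
  ring

theorem X_sub_one_mul_peirceBasisOne :
    (X - C 1) * peirceBasisOne R = peircePolynomial R := by
  rw [C_1, peirceBasisOne, peircePolynomial]
  ring

theorem X_sub_invOf_two_mul_peirceBasisHalf [Invertible (2 : R)] :
    (X - C ⅟2) * peirceBasisHalf R = -2 * peircePolynomial R := by
  have two_mul_C_invOf_two : 2 * C (⅟2 : R) = 1 := by
    rw [← C_ofNat, ← C_mul, mul_invOf_self, C_1]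
  rw [peirceBasisHalf, peircePolynomial]
  linear_combination -2 * X * (1 - X) * two_mul_C_invOf_two

theorem X_sub_zero_mul_peirceBasisZero :
    (X - C 0) * peirceBasisZero R = peircePolynomial R := by
  rw [C_0, peirceBasisZero, peircePolynomial]
  ring

end PeircePolynomials

section Endomorphism

variable {R M : Type*} [CommRing R] [AddCommGroup M] [Module R M] {T : Module.End R M}

theorem apply_aeval_eq_smul_of_dvd {p q : R[X]} {c : R} (hp : aeval T p = 0)
    (hdvd : p ∣ (X - C c) * q) (x : M) : T (aeval T q x) = c • aeval T q x := by
  have annihilated : aeval T ((X - C c) * q) x = 0 := by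
    obtain ⟨r, hr⟩ := hdvd
    rw [hr, map_mul, hp, zero_mul, LinearMap.zero_apply]
  simpa only [map_mul, map_sub, aeval_X, aeval_C, Module.End.mul_apply, LinearMap.sub_apply,
    Module.algebraMap_end_apply, sub_eq_zero] using annihilated

variable [Invertible (2 : R)]

theorem aeval_apply_add_add_of_peirce_components {p q r : M} (hp : T p = p)
    (hq : T q = (⅟2 : R) • q) (hr : T r = 0) (P : R[X]) :
    aeval T P (p + q + r) = P.eval 1 • p + P.eval ⅟2 • q + P.eval 0 • r := by
  rw [map_add, map_add,
    Module.End.aeval_apply_of_mem_apply_eq_smul (μ := (1 : R)) (by rw [hp, one_smul]),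
    Module.End.aeval_apply_of_mem_apply_eq_smul hq,
    Module.End.aeval_apply_of_mem_apply_eq_smul (μ := (0 : R)) (by rw [hr, zero_smul])]

theorem eq_aeval_peirceBasis_of_peirce_components {p q r : M} (hp : T p = p)
    (hq : T q = (⅟2 : R) • q) (hr : T r = 0) :
    p = aeval T (peirceBasisOne R) (p + q + r) ∧
      q = aeval T (peirceBasisHalf R) (p + q + r) ∧
      r = aeval T (peirceBasisZero R) (p + q + r) := by
  simp only [aeval_apply_add_add_of_peirce_components hp hq hr]
  refine ⟨?_, ?_, ?_⟩
  · norm_num [peirceBasisOne]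
  · norm_num [peirceBasisHalf]
  · norm_num [peirceBasisZero]

theorem existsUnique_peirce_components (hT : aeval T (peircePolynomial R) = 0) (x : M) :
    ∃! p : M × M × M,
      T p.1 = p.1 ∧ T p.2.1 = (⅟2 : R) • p.2.1 ∧ T p.2.2 = 0 ∧ x = p.1 + p.2.1 + p.2.2 := by
  refine ⟨(aeval T (peirceBasisOne R) x, aeval T (peirceBasisHalf R) x,
    aeval T (peirceBasisZero R) x), ⟨?_, ?_, ?_, ?_⟩, ?_⟩
  · simpa only [one_smul] using
      apply_aeval_eq_smul_of_dvd hT (X_sub_one_mul_peirceBasisOne R).symm.dvd x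
  · exact apply_aeval_eq_smul_of_dvd hT
      (Dvd.intro_left _ (X_sub_invOf_two_mul_peirceBasisHalf R).symm) x
  · simpa only [zero_smul] using
      apply_aeval_eq_smul_of_dvd hT (X_sub_zero_mul_peirceBasisZero R).symm.dvd x
  · rw [← LinearMap.add_apply, ← LinearMap.add_apply, ← map_add, ← map_add,
      peirceBasisOne_add_peirceBasisHalf_add_peirceBasisZero, map_one, Module.End.one_apply]
  · rintro ⟨p, q, r⟩ ⟨hp, hq, hr, rfl⟩
    obtain ⟨hp_proj, hq_proj, hr_proj⟩ := eq_aeval_peirceBasis_of_peirce_components hp hq hr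
    exact Prod.ext hp_proj (Prod.ext hq_proj hr_proj)

end Endomorphism

section JordanIdentity

variable {R J : Type*} [CommRing R] [Invertible (2 : R)] [AddCommGroup J] [Module R J]
  {mul : J →ₗ[R] J →ₗ[R] J}

theorem jordan_identity_linearized {y : J}
    (hjordan : ∀ x : J, mul (mul x y) (mul x x) = mul x (mul y (mul x x))) (x z : J) :
    mul (mul z y) (mul x x) + mul (mul x y) (mul x z + mul z x) =
      mul z (mul y (mul x x)) + mul x (mul y (mul x z + mul z x)) := by
  have at_add := hjordan (x + z)
  have at_sub := hjordan (x - z)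
  have at_z := hjordan z
  apply (isUnit_of_invertible (2 : R)).smul_left_cancel.mp
  simp only [map_add, map_sub, LinearMap.add_apply, LinearMap.sub_apply] at at_add at_sub ⊢
  -- The difference of `at_add` and `at_sub` is twice the sum of the parts of degree 1 and 3 in `z`.
  linear_combination (norm := module) at_add - at_sub - (2 : R) • at_z

theorem aeval_peircePolynomial_mul_idempotent {a : J} (hcomm : ∀ x : J, mul x a = mul a x)
    (hjordan : ∀ x : J, mul (mul x a) (mul x x) = mul x (mul a (mul x x)))
    (ha : mul a a = a) : aeval (mul a : Module.End R J) (peircePolynomial R) = 0 := by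
  ext z
  have cubic : (3 : R) • mul a (mul a z) = mul a z + (2 : R) • mul a (mul a (mul a z)) := by
    have linearized := jordan_identity_linearized hjordan a z
    simp only [ha, hcomm, map_add] at linearized
    linear_combination (norm := module) linearized
  simp only [peircePolynomial, map_mul, map_sub, aeval_X, map_one, map_ofNat,
    Module.End.mul_apply, LinearMap.sub_apply, Module.End.one_apply, LinearMap.zero_apply,
    Module.End.ofNat_apply, map_nsmul]
  linear_combination (norm := module) -cubic

theorem jordan_peirce_decomposition_general {a : J} (hcomm : ∀ x : J, mul x a = mul a x)
    (hjordan : ∀ x : J, mul (mul x a) (mul x x) = mul x (mul a (mul x x)))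
    (ha : mul a a = a) (x : J) :
    ∃! p : J × J × J,
      mul a p.1 = p.1 ∧
      mul a p.2.1 = (⅟2 : R) • p.2.1 ∧
      mul a p.2.2 = 0 ∧
      x = p.1 + p.2.1 + p.2.2 :=
  existsUnique_peirce_components (aeval_peircePolynomial_mul_idempotent hcomm hjordan ha) x

end JordanIdentity

/-- Peirce decomposition of a Jordan algebra relative to an idempotent `a`:
the algebra is the internal direct sum of the eigenspaces of `L_a : x ↦ a * x`
for the eigenvalues `1`, `1/2` and `0`; i.e. every element decomposes uniquely
as a sum of elements of `J₁(a)`, `J_{1/2}(a)` and `J₀(a)`. -/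
theorem jordan_peirce_decomposition
    {J : Type*} [AddCommGroup J] [Module ℝ J]
    (mul : J →ₗ[ℝ] J →ₗ[ℝ] J)
    (hcomm : ∀ x y : J, mul x y = mul y x)
    (hjordan : ∀ x y : J, mul (mul x y) (mul x x) = mul x (mul y (mul x x)))
    (a : J) (ha : mul a a = a) :
    ∀ x : J, ∃! p : J × J × J,
      mul a p.1 = p.1 ∧
      mul a p.2.1 = (1 / 2 : ℝ) • p.2.1 ∧
      mul a p.2.2 = 0 ∧
      x = p.1 + p.2.1 + p.2.2 := by
  simpa only [invOf_eq_inv, one_div] using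
    jordan_peirce_decomposition_general (hcomm · a) (hjordan · a) ha
end

section
/- Let A be an associative unital ℝ-algebra of dimension 2 over ℝ. Then there exists an element ε ∈ A such that (1, ε) is an ℝ-basis of A and ε² = 1, or ε² = −1, or ε² = 0. Consequently every two-dimensional unital associative ℝ-algebra is isomorphic to the paracomplex numbers, to the complex numbers, or to the dual numbers. -/
/-!
Complete the square: if `(1, u)` is a basis and `u² = p + q u`, then `v = u - q / 2` squares to the
scalar `d = p + q² / 4`. When `d` or `-d` is a nonzero square, dividing `v` by its root makes the
square `1` or `-1`; when `d = 0`, `v` itself serves as `ε`. The square of `ε` determines the whole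
multiplication, so matching `ε` with an element of the model having the same square gives the
isomorphism.
-/

section Semiring

variable {R A : Type*} [CommSemiring R] [Semiring A] [Algebra R A] {e : A}

variable (R) in
/-- `(1, e)` is a basis of the `R`-algebra `A`, encoded as bijectivity of the map `(r, s) ↦ r + s e`
on pairs of scalars. -/
def IsBasisWithOne (e : A) : Prop :=
  Function.Bijective fun c : R × R => algebraMap R A c.1 + c.2 • e

namespace IsBasisWithOne

theorem of_bijective {g : R × R → A} (hg : Function.Bijective g)
    (h : ∀ c, g c = algebraMap R A c.1 + c.2 • e) : IsBasisWithOne R e := by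
  rwa [funext h] at hg

theorem existsUnique_eq (he : IsBasisWithOne R e) (x : A) :
    ∃! c : R × R, x = algebraMap R A c.1 + c.2 • e := by
  simpa only [eq_comm] using he.existsUnique x

theorem units_smul (he : IsBasisWithOne R e) (s : Rˣ) : IsBasisWithOne R ((s : R) • e) :=
  of_bijective (he.comp ((Equiv.refl R).prodCongr s.mulRight).bijective) fun c => by
    simp [mul_smul]

end IsBasisWithOne

theorem isBasisWithOne_dualNumber_eps : IsBasisWithOne R (DualNumber.eps : DualNumber R) :=
  Function.bijective_iff_has_inverse.mpr
    ⟨fun x => (x.fst, x.snd),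
      fun c => by simp [TrivSqZeroExt.algebraMap_eq_inl],
      fun x => by ext <;> simp [TrivSqZeroExt.algebraMap_eq_inl]⟩

end Semiring

section Ring

variable {R A B : Type*} [CommRing R] [Ring A] [Algebra R A] [Ring B] [Algebra R B]

theorem isBasisWithOne_one_neg_one [Invertible (2 : R)] :
    IsBasisWithOne R ((1, -1) : R × R) := by
  have h2 : (2 : R) * ⅟2 = 1 := mul_invOf_self 2
  refine Function.bijective_iff_has_inverse.mpr
    ⟨fun x => (⅟2 * (x.1 + x.2), ⅟2 * (x.1 - x.2)), fun c => ?_, fun x => ?_⟩ <;>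
  simp only [Prod.algebraMap_apply, Algebra.algebraMap_self, RingHom.id_apply, Prod.smul_mk,
    smul_eq_mul, mul_one, mul_neg, Prod.mk_add_mk]
  · ext
    · linear_combination c.1 * h2
    · linear_combination c.2 * h2
  · ext
    · linear_combination x.1 * h2
    · linear_combination x.2 * h2

namespace IsBasisWithOne

variable {e : A} {f : B} {a b : R}

theorem sub_algebraMap (he : IsBasisWithOne R e) (t : R) :
    IsBasisWithOne R (e - algebraMap R A t) := by
  let shear : R × R ≃ R × R :=
    { toFun := fun c => (c.1 - c.2 * t, c.2)
      invFun := fun c => (c.1 + c.2 * t, c.2)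
      left_inv := fun c => by simp
      right_inv := fun c => by simp }
  refine of_bijective (he.comp shear.bijective) fun c => ?_
  simp only [shear, Function.comp_apply, Equiv.coe_fn_mk, Algebra.algebraMap_eq_smul_one]
  module

theorem exists_mul_self_eq_algebraMap [Invertible (2 : R)] (he : IsBasisWithOne R e) :
    ∃ (v : A) (d : R), IsBasisWithOne R v ∧ v * v = algebraMap R A d := by
  obtain ⟨⟨p, q⟩, hpq⟩ := he.surjective (e * e)
  obtain ⟨t, rfl⟩ : ∃ t, 2 * t = q := ⟨⅟2 * q, mul_invOf_cancel_left' 2 q⟩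
  refine ⟨e - algebraMap R A t, p + t ^ 2, he.sub_algebraMap t, ?_⟩
  simp only [Algebra.algebraMap_eq_smul_one] at hpq ⊢
  simp only [sub_mul, mul_sub, ← hpq, smul_mul_assoc, mul_smul_comm, one_mul, mul_one]
  module

theorem exists_mul_self_eq_of_units (he : IsBasisWithOne R e) (s : Rˣ)
    (h : e * e = algebraMap R A (s * s * a)) :
    ∃ ε : A, IsBasisWithOne R ε ∧ ε * ε = algebraMap R A a := by
  refine ⟨(↑s⁻¹ : R) • e, he.units_smul s⁻¹, ?_⟩
  rw [smul_mul_smul_comm, h, Algebra.smul_def, ← map_mul, mul_mul_mul_comm]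
  simp

/-- The isomorphism from the algebra `R[ω]` with `ω² = a + b ω` that sends `ω` to `e`. -/
noncomputable def quadraticAlgebraEquiv (he : IsBasisWithOne R e) (h : e * e = a • 1 + b • e) :
    QuadraticAlgebra R a b ≃ₐ[R] A :=
  AlgEquiv.ofBijective (QuadraticAlgebra.lift ⟨e, h⟩) <| by
    convert! he.comp (QuadraticAlgebra.equivProd a b).bijective using 2
    ext z
    simp [Algebra.algebraMap_eq_smul_one, QuadraticAlgebra.equivProd]

/-- Algebras with bases `(1, e)` and `(1, f)` whose second elements satisfy the same monic quadratic
equation are isomorphic. -/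
noncomputable def algEquiv (he : IsBasisWithOne R e) (hf : IsBasisWithOne R f)
    (h : e * e = a • 1 + b • e) (h' : f * f = a • 1 + b • f) : A ≃ₐ[R] B :=
  (he.quadraticAlgebraEquiv h).symm.trans (hf.quadraticAlgebraEquiv h')

end IsBasisWithOne

end Ring

section Field

variable {K A : Type*} [Field K] [Ring A] [Algebra K A]

theorem IsBasisWithOne.of_notMem_bot {e : A} (hdim : Module.finrank K A = 2)
    (he : e ∉ (⊥ : Subalgebra K A)) : IsBasisWithOne K e := by
  have : Nontrivial A := Module.nontrivial_of_finrank_pos (R := K) (by lia)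
  have hli : LinearIndependent K ![1, e] :=
    (LinearIndependent.pair_iff' one_ne_zero).mpr fun r hr =>
      he <| Algebra.mem_bot.mpr ⟨r, by rw [Algebra.algebraMap_eq_smul_one, hr]⟩
  let basis := basisOfLinearIndependentOfCardEqFinrank hli (by simp [hdim])
  refine of_bijective
    (basis.equivFun.symm.bijective.comp (finTwoArrowEquiv K).symm.bijective) fun c => ?_
  simp [basis, Module.Basis.equivFun_symm_apply, Algebra.algebraMap_eq_smul_one]

theorem exists_isBasisWithOne_of_finrank_eq_two (hdim : Module.finrank K A = 2) :
    ∃ e : A, IsBasisWithOne K e := by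
  have : Nontrivial A := Module.nontrivial_of_finrank_pos (R := K) (by lia)
  have hbot : (⊥ : Subalgebra K A) ≠ ⊤ := fun h => by
    have := Subalgebra.bot_eq_top_iff_finrank_eq_one.mp h
    lia
  obtain ⟨e, -, he⟩ := SetLike.exists_of_lt hbot.lt_top
  exact ⟨e, .of_notMem_bot hdim he⟩

theorem exists_isBasisWithOne_mul_self_eq_one_or_neg_one_or_zero [NeZero (2 : K)]
    (hsq : ∀ d : K, IsSquare d ∨ IsSquare (-d)) (hdim : Module.finrank K A = 2) :
    ∃ ε : A, IsBasisWithOne K ε ∧ (ε * ε = 1 ∨ ε * ε = -1 ∨ ε * ε = 0) := by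
  have := invertibleOfNonzero (two_ne_zero (α := K))
  obtain ⟨u, hu⟩ := exists_isBasisWithOne_of_finrank_eq_two hdim
  obtain ⟨v, d, hv, hvd⟩ := hu.exists_mul_self_eq_algebraMap
  obtain rfl | hd := eq_or_ne d 0
  · exact ⟨v, hv, .inr <| .inr <| by simpa using hvd⟩
  obtain hd_sq | hd_sq := hsq d
  · obtain ⟨s, rfl⟩ := hd_sq
    have hs : s ≠ 0 := left_ne_zero_of_mul hd
    obtain ⟨ε, hε, hεε⟩ := hv.exists_mul_self_eq_of_units (a := 1) (Units.mk0 s hs) (by simp [hvd])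
    exact ⟨ε, hε, .inl <| by simpa using hεε⟩
  · obtain ⟨s, hds⟩ := hd_sq
    have hs : s ≠ 0 := left_ne_zero_of_mul (hds ▸ neg_ne_zero.mpr hd)
    obtain ⟨ε, hε, hεε⟩ := hv.exists_mul_self_eq_of_units (a := -1) (Units.mk0 s hs)
      (by simp [hvd, ← hds])
    exact ⟨ε, hε, .inr <| .inl <| by simpa using hεε⟩

/-- The role of `ℂ` is played by `K[i] = QuadraticAlgebra K (-1) 0`, which is isomorphic to `K × K`
when `-1` is a square in `K`. -/
theorem two_dimensional_real_algebra_classification_general [NeZero (2 : K)]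
    (hsq : ∀ d : K, IsSquare d ∨ IsSquare (-d)) (hdim : Module.finrank K A = 2) :
    (∃ ε : A,
      (∀ x : A, ∃! c : K × K, x = algebraMap K A c.1 + c.2 • ε) ∧
      (ε * ε = 1 ∨ ε * ε = -1 ∨ ε * ε = 0)) ∧
    (Nonempty (A ≃ₐ[K] (K × K)) ∨ Nonempty (A ≃ₐ[K] QuadraticAlgebra K (-1) 0) ∨
      Nonempty (A ≃ₐ[K] DualNumber K)) := by
  have := invertibleOfNonzero (two_ne_zero (α := K))
  obtain ⟨ε, hε, h⟩ := exists_isBasisWithOne_mul_self_eq_one_or_neg_one_or_zero hsq hdim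
  refine ⟨⟨ε, hε.existsUnique_eq, h⟩, ?_⟩
  refine h.imp (fun h => ⟨?_⟩) (Or.imp (fun h => ⟨?_⟩) fun h => ⟨?_⟩)
  · exact hε.algEquiv isBasisWithOne_one_neg_one (a := 1) (b := 0) (by simp [h]) (by simp)
  · exact (hε.quadraticAlgebraEquiv (by simp [h])).symm
  · exact hε.algEquiv isBasisWithOne_dualNumber_eps (a := 0) (b := 0) (by simp [h]) (by simp)

end Field

theorem real_isSquare_or_isSquare_neg (d : ℝ) : IsSquare d ∨ IsSquare (-d) := by
  simpa using le_total 0 d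

theorem isBasisWithOne_complex_I : IsBasisWithOne ℝ Complex.I :=
  .of_bijective Complex.equivRealProd.symm.bijective fun c => by simp

/-- Every two-dimensional associative unital ℝ-algebra has a basis `(1, ε)` with
`ε² = 1`, `ε² = -1` or `ε² = 0`; consequently it is isomorphic as an ℝ-algebra to
the paracomplex numbers `ℝ × ℝ`, to the complex numbers `ℂ`, or to the dual
numbers `ℝ[ε]/(ε²)`. -/
theorem two_dimensional_real_algebra_classification
    (A : Type*) [Ring A] [Algebra ℝ A] (hdim : Module.finrank ℝ A = 2) :
    (∃ ε : A,
      (∀ x : A, ∃! c : ℝ × ℝ, x = algebraMap ℝ A c.1 + c.2 • ε) ∧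
      (ε * ε = 1 ∨ ε * ε = -1 ∨ ε * ε = 0)) ∧
    (Nonempty (A ≃ₐ[ℝ] (ℝ × ℝ)) ∨ Nonempty (A ≃ₐ[ℝ] ℂ) ∨
      Nonempty (A ≃ₐ[ℝ] DualNumber ℝ)) := by
  let equivComplex : QuadraticAlgebra ℝ (-1) 0 ≃ₐ[ℝ] ℂ :=
    isBasisWithOne_complex_I.quadraticAlgebraEquiv (by simp)
  exact (two_dimensional_real_algebra_classification_general real_isSquare_or_isSquare_neg hdim)
    |>.imp_right <| .imp_right <| .imp_left <| .map (·.trans equivComplex)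
end
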